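/- If the abelian group G is torsion-free, then for every abelian group H the group Ext¹(G,H) is divisible: for every x ∈ Ext¹(G,H) and every integer n ≥ 1 there exists y ∈ Ext¹(G,H) with n·y = x. Consequently Pext¹(G,H) = ⋂_{n≥1} n·Ext¹(G,H) equals all of Ext¹(G,H) and is divisible. -/

import Mathlib

open CategoryTheory

/-- `Ext¹(G,H)`: the Ext group `Ext¹_ℤ(G,H)` of abelian groups (ℤ-modules). -/
noncomputable abbrev Ext1 (G H : Type) [AddCommGroup G] [AddCommGroup H] : Type :=
  ((_root_.Ext ℤ (ModuleCat.{0} ℤ) 1).obj (Opposite.op (ModuleCat.of ℤ G))).obj (ModuleCat.of ℤ H)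

/-- `Pext¹(G,H) = ⋂_{n ≥ 1} n · Ext¹(G,H)`. -/
noncomputable def Pext1 (G H : Type) [AddCommGroup G] [AddCommGroup H] :
    AddSubgroup (Ext1 G H) :=
  ⨅ (n : ℕ) (_ : 1 ≤ n), (n • AddMonoidHom.id (Ext1 G H)).range

/-!
Multiplication by `n` is injective on the torsion-free group `G`, so it sits in a short exact
sequence `0 ⟶ G ⟶ G ⟶ G/nG ⟶ 0`, whose long exact sequence shows that the obstruction to dividing an
element of `Ext¹(G,H)` by `n` lies in `Ext²(G/nG,H)`. This group vanishes: every ideal of `ℤ` is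
projective, so quotients of injective modules are injective and every module has injective
dimension at most one.

The long exact sequence is available for `Abelian.Ext`, defined through the derived category, hence
the comparison with `_root_.Ext`, defined through projective resolutions; both are cocycles modulo
coboundaries on a projective resolution.
-/

open Opposite

universe w v u

section Comparison

variable {R : Type*} [Ring R] {C : Type u} [Category.{v} C] [Abelian C] [Linear R C]
  [HasExt.{w} C] {X : C}

lemma smul_extMk (P : ProjectiveResolution X) {Y : C} {n m : ℕ} (r : R) (f : P.complex.X n ⟶ Y)
    (hm : n + 1 = m) (hf : P.complex.d m n ≫ f = 0) :
    r • P.extMk f m hm hf = P.extMk (r • f) m hm (by rw [Linear.comp_smul, hf, smul_zero]) := by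
  simp only [Abelian.Ext.smul_eq_comp_mk₀, P.extMk_comp_mk₀, Linear.comp_smul, Category.comp_id]

variable (R)

/-- The degree `n + 1` part `Hom(Pₙ, Y) ⟶ Hom(Pₙ₊₁, Y) ⟶ Hom(Pₙ₊₂, Y)` of the Hom complex whose
homology computes `_root_.Ext`. -/
noncomputable abbrev homShortComplex (P : ProjectiveResolution X) (Y : C) (n : ℕ) :
    ShortComplex (ModuleCat R) :=
  (P.complex.linearYonedaObj R Y).sc' n (n + 1) (n + 2)

/-- The map sending a cocycle `Pₙ₊₁ ⟶ Y` to its class in `Abelian.Ext X Y (n + 1)`. -/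
noncomputable def cocycleClass (P : ProjectiveResolution X) (Y : C) (n : ℕ) :
    LinearMap.ker (homShortComplex R P Y n).g.hom →ₗ[R] Abelian.Ext X Y (n + 1) where
  toFun f := P.extMk f.1 (n + 2) rfl f.2
  map_add' f g := (P.add_extMk f.1 g.1 (n + 2) rfl f.2 g.2).symm
  map_smul' r f := (smul_extMk P r f.1 rfl f.2).symm

lemma cocycleClass_surjective (P : ProjectiveResolution X) (Y : C) (n : ℕ) :
    Function.Surjective (cocycleClass R P Y n) := by
  intro α
  obtain ⟨f, hf, rfl⟩ := P.extMk_surjective α (n + 2) rfl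
  exact ⟨⟨f, hf⟩, rfl⟩

lemma ker_cocycleClass (P : ProjectiveResolution X) (Y : C) (n : ℕ) :
    LinearMap.ker (cocycleClass R P Y n) =
      LinearMap.range (homShortComplex R P Y n).moduleCatToCycles := by
  ext f
  exact (P.extMk_eq_zero_iff f.1 (n + 2) rfl f.2 n rfl).trans
    ⟨fun ⟨g, hg⟩ ↦ ⟨g, Subtype.ext hg⟩, fun ⟨g, hg⟩ ↦ ⟨g, congrArg Subtype.val hg⟩⟩

/-- The comparison, in positive degrees, of `_root_.Ext` with the `Ext` of the derived category. -/
noncomputable def extLinearEquivAbelianExt [EnoughProjectives C] (X Y : C) (n : ℕ) :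
    ((_root_.Ext R C (n + 1)).obj (op X)).obj Y ≃ₗ[R] Abelian.Ext X Y (n + 1) :=
  let P := projectiveResolution X
  (P.isoExt (n + 1) Y ≪≫
      (P.complex.linearYonedaObj R Y).homologyIsoSc' n (n + 1) (n + 2) (by simp) (by simp) ≪≫
      (homShortComplex R P Y n).moduleCatHomologyIso).toLinearEquiv ≪≫ₗ
    Submodule.quotEquivOfEq _ _ (ker_cocycleClass R P Y n).symm ≪≫ₗ
    (cocycleClass R P Y n).quotKerEquivOfSurjective (cocycleClass_surjective R P Y n)

end Comparison

section InjectiveDimension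

lemma precomp_mk₀_surjective_of_mono {C : Type u} [Category.{v} C] [Abelian C] [HasExt.{w} C]
    {X X' : C} (i : X ⟶ X') [Mono i] (Y : C) (n : ℕ) [HasInjectiveDimensionLE Y n] :
    Function.Surjective ((Abelian.Ext.mk₀ i).precomp Y (zero_add n)) := by
  intro x
  have exact_i : (ShortComplex.mk i _ (Limits.cokernel.condition i)).ShortExact :=
    { exact := ShortComplex.exact_cokernel i }
  exact Abelian.Ext.contravariant_sequence_exact₁ exact_i Y x rfl
    (Abelian.Ext.eq_zero_of_hasInjectiveDimensionLT _ (n + 1) (Nat.add_comm 1 n).ge)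

lemma abelianExt_smul_surjective {R : Type*} [Ring R] {C : Type u} [Category.{v} C] [Abelian C]
    [Linear R C] [HasExt.{w} C] (X Y : C) (r : R) [Mono (r • 𝟙 X)] (n : ℕ)
    [HasInjectiveDimensionLE Y n] :
    Function.Surjective (r • · : Abelian.Ext X Y n → Abelian.Ext X Y n) := by
  intro x
  obtain ⟨y, rfl⟩ := precomp_mk₀_surjective_of_mono (r • 𝟙 X) Y n x
  exact ⟨y, by simp [Abelian.Ext.mk₀_smul]⟩

lemma ext_smul_surjective {R : Type*} [Ring R] {C : Type u} [Category.{v} C] [Abelian C]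
    [Linear R C] [EnoughProjectives C] (X Y : C) (r : R) [Mono (r • 𝟙 X)] (n : ℕ)
    [HasInjectiveDimensionLE Y (n + 1)] :
    Function.Surjective (r • · : ((_root_.Ext R C (n + 1)).obj (op X)).obj Y → _) := by
  intro x
  have := HasExt.standard C
  let e := extLinearEquivAbelianExt R X Y n
  obtain ⟨y, hy : r • y = e x⟩ := abelianExt_smul_surjective X Y r (n + 1) (e x)
  exact ⟨e.symm y, by simp only [← map_smul, hy, LinearEquiv.symm_apply_apply]⟩

variable {R : Type u} [Ring R]

lemma baer_of_surjective_of_projective_ideal [∀ I : Ideal R, Module.Projective R I]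
    {E Q : Type*} [AddCommGroup E] [Module R E] [AddCommGroup Q] [Module R Q]
    (hE : Module.Baer R E) (π : E →ₗ[R] Q) (hπ : Function.Surjective π) : Module.Baer R Q := by
  intro I g
  obtain ⟨lift, hlift⟩ := Module.projective_lifting_property π g hπ
  obtain ⟨extension, hextension⟩ := hE I lift
  refine ⟨π ∘ₗ extension, fun x hx ↦ ?_⟩
  rw [LinearMap.comp_apply, hextension x hx, ← hlift, LinearMap.comp_apply]

lemma injective_of_epi_of_projective_ideal [Small.{v} R] [∀ I : Ideal R, Module.Projective R I]
    {E Q : ModuleCat.{v} R} [Injective E] (π : E ⟶ Q) [Epi π] : Injective Q := by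
  have hE : Module.Baer R E :=
    Module.Baer.of_injective (Module.injective_module_of_injective_object R E)
  have hQ : Module.Baer R Q :=
    baer_of_surjective_of_projective_ideal hE π.hom ((ModuleCat.epi_iff_surjective π).1 ‹_›)
  exact Module.injective_object_of_injective_module (inj := hQ.injective)

lemma hasInjectiveDimensionLE_one_of_projective_ideal [Small.{v} R]
    [∀ I : Ideal R, Module.Projective R I] (M : ModuleCat.{v} R) :
    HasInjectiveDimensionLE M 1 := by
  have exact_ι : (ShortComplex.mk (Injective.ι M) _ (Limits.cokernel.condition _)).ShortExact :=
    { exact := ShortComplex.exact_cokernel _ }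
  have : Injective (Limits.cokernel (Injective.ι M)) :=
    injective_of_epi_of_projective_ideal (Limits.cokernel.π (Injective.ι M))
  exact exact_ι.hasInjectiveDimensionLT_X₁ 1 inferInstance inferInstance

end InjectiveDimension

lemma iInf_range_nsmul_id_eq_top_iff (A : Type*) [AddCommGroup A] :
    (⨅ (n : ℕ) (_ : 1 ≤ n), (n • AddMonoidHom.id A).range) = ⊤ ↔
      ∀ (x : A) (n : ℕ), 1 ≤ n → ∃ y : A, n • y = x := by
  simp only [AddSubgroup.eq_top_iff', AddSubgroup.mem_iInf, AddMonoidHom.mem_range,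
    AddMonoidHom.nsmul_apply, AddMonoidHom.id_apply]

/- The `K`-linear structure is arbitrary because `ModuleCat ℤ` carries two `ℤ`-linear structures
that are not definitionally equal, and instance search in `Ext1` picks the preadditive one over the
one of a category of modules. -/
theorem ext1_divisible_of_torsionFree_general {R : Type u} [Ring R] [Small.{v} R]
    [∀ I : Ideal R, Module.Projective R I] (K : Type*) [Ring K] [Linear K (ModuleCat.{v} R)]
    (G H : ModuleCat.{v} R) (hG : ∀ (n : ℕ) (x : G), 1 ≤ n → n • x = 0 → x = 0) :
    let E := ((_root_.Ext K (ModuleCat.{v} R) 1).obj (op G)).obj H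
    (∀ (x : E) (n : ℕ), 1 ≤ n → ∃ y : E, n • y = x) ∧
      (⨅ (n : ℕ) (_ : 1 ≤ n), (n • AddMonoidHom.id E).range) = ⊤ := by
  intro E
  have divisible (x : E) (n : ℕ) (hn : 1 ≤ n) : ∃ y : E, n • y = x := by
    have mono_n : Mono ((n : K) • 𝟙 G) := by
      rw [Nat.cast_smul_eq_nsmul, ModuleCat.mono_iff_injective, injective_iff_map_eq_zero]
      exact fun g hg ↦ hG n g hn hg
    have := hasInjectiveDimensionLE_one_of_projective_ideal H
    obtain ⟨y, hy : (n : K) • y = x⟩ := ext_smul_surjective G H (n : K) 0 x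
    exact ⟨y, by rwa [Nat.cast_smul_eq_nsmul] at hy⟩
  exact ⟨divisible, (iInf_range_nsmul_id_eq_top_iff E).2 divisible⟩

/-- If `G` is torsion-free, then for every abelian group `H` the group `Ext¹(G,H)` is
divisible, and consequently `Pext¹(G,H) = ⋂_{n≥1} n·Ext¹(G,H)` is all of `Ext¹(G,H)`
(and in particular divisible). -/
theorem ext1_divisible_of_torsionFree (G H : Type) [AddCommGroup G] [AddCommGroup H]
    (hG : ∀ (n : ℕ) (x : G), 1 ≤ n → n • x = 0 → x = 0) :
    (∀ (x : Ext1 G H) (n : ℕ), 1 ≤ n → ∃ y : Ext1 G H, n • y = x) ∧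
      Pext1 G H = ⊤ :=
  ext1_divisible_of_torsionFree_general ℤ (ModuleCat.of ℤ G) (ModuleCat.of ℤ H) hG
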